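/- Let r ≥ 2 be an integer and let G be a distance-regular graph with intersection array {(r+1)², (r−1)(r+2), 1; 1, r+2, (r+1)²}. Then G is an antipodal r-cover of diameter 3, its smallest adjacency eigenvalue equals −(r+1), and its distance matrix 𝔻₁ has exactly three distinct eigenvalues. -/

import Mathlib

open Matrix

variable {V : Type*} [Fintype V] [DecidableEq V]

/-- The distance-`i` matrix of a graph: the `(x,y)` entry is 1 if `dist x y = i`, else 0. -/
noncomputable def distM (G : SimpleGraph V) (i : ℕ) : Matrix V V ℝ :=
  Matrix.of fun x y => if G.dist x y = i then (1 : ℝ) else 0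

/-- The `q`-distance matrix `𝔻_q = ∑_{i=1}^D (1 + 1/q + ⋯ + 1/q^{i-1}) • A_i`. -/
noncomputable def qDist (G : SimpleGraph V) (D : ℕ) (q : ℝ) : Matrix V V ℝ :=
  ∑ i ∈ Finset.Icc 1 D, (∑ j ∈ Finset.range i, (1 / q) ^ j) • distM G i

/-- `G` is distance-regular with diameter `D` and intersection numbers `b i`, `c i`
(with `c 1 = 1`): for any vertices `x, y` at distance `i ≤ D`, the number of neighbors
of `y` at distance `i - 1` from `x` is `c i` and the number of neighbors of `y` at
distance `i + 1` from `x` is `b i`. -/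
def IsDRG (G : SimpleGraph V) (D : ℕ) (b c : ℕ → ℕ) : Prop :=
  G.Connected ∧
  (∀ x y : V, G.dist x y ≤ D) ∧
  (∃ x y : V, G.dist x y = D) ∧
  c 1 = 1 ∧
  ∀ i ≤ D, ∀ x y : V, G.dist x y = i →
    ({z : V | G.Adj y z ∧ G.dist x z = i - 1} : Set V).ncard = c i ∧
    ({z : V | G.Adj y z ∧ G.dist x z = i + 1} : Set V).ncard = b i

/-- `a i = k - b i - c i` as a real number, where `k = b 0`. -/
noncomputable def aInt (b c : ℕ → ℕ) (i : ℕ) : ℝ := (b 0 : ℝ) - (b i : ℝ) - (c i : ℝ)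

/-- `G` is antipodal with diameter `D`: being equal or at distance `D` is an equivalence
relation on the vertices. -/
def IsAntipodal (G : SimpleGraph V) (D : ℕ) : Prop :=
  ∀ u v w : V, G.dist u v = D → G.dist u w = D → (v = w ∨ G.dist v w = D)

/-- `G` is an antipodal `r`-cover with diameter `D`: every antipodal class has exactly `r`
elements. -/
def IsAntipodalCover (G : SimpleGraph V) (D r : ℕ) : Prop :=
  IsAntipodal G D ∧ ∀ x : V, ({y : V | y = x ∨ G.dist x y = D} : Set V).ncard = r

/-
Let `k = b₀`, `A = A₁`, `K = I + A₃` and let `J` be the all-ones matrix. The recurrence for `A_i A`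
gives `K A = J - K` and `A² = k I + (a₁ - c₂) A + c₂ (J - K)`. Expanding `K A²` in two ways yields
`K² = r K`, which for the 0/1 matrix `K` with ones on the diagonal means that the relation `K` is an
equivalence with classes of size `r`. If `θ` and `τ` are the roots of `x² + (c₂ - a₁) x - k`, then
`(A - θ)(A - τ) = c₂ (J - K)` is annihilated by `r I - K`, so the columns of `J`, `(k + 1) K - J`,
`(A - τ)(r I - K)` and `(A - θ)(r I - K)` are common eigenvectors of `J`, `K` and `A`. As `I` is a
linear combination of these matrices, they show the whole spectra of `A` and of the distance matrix
`2 J - 3 I - A + K`. For `θ = -(r + 1)` the distance eigenvalues `r - 2` and `-3 - θ` agree.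
-/

section Spectrum

variable {𝕜 R ι : Type*} [Field 𝕜] [Ring R] [Algebra 𝕜 R]

theorem mem_spectrum_of_mul_eq_smul {a e : R} {μ : 𝕜} (hae : a * e = μ • e) (he : e ≠ 0) :
    μ ∈ spectrum 𝕜 a := by
  rw [spectrum.mem_iff]
  intro hunit
  refine he (hunit.mul_right_eq_zero.mp ?_)
  rw [sub_mul, ← Algebra.smul_def, hae, sub_self]

theorem spectrum_eq_range_of_mul_eq_smul [IsDedekindFiniteMonoid R] {a : R} {e : ι → R}
    {μ : ι → 𝕜} (hae : ∀ i, a * e i = μ i • e i) (he : ∀ i, e i ≠ 0)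
    (hspan : 1 ∈ Submodule.span 𝕜 (Set.range e)) :
    spectrum 𝕜 a = Set.range μ := by
  refine Set.Subset.antisymm (fun l hl => ?_) ?_
  · by_contra hlμ
    have hsub : ∀ i, l - μ i ≠ 0 := fun i h => hlμ ⟨i, (sub_eq_zero.mp h).symm⟩
    have hle : Submodule.span 𝕜 (Set.range e) ≤
        LinearMap.range (LinearMap.mulLeft 𝕜 (algebraMap 𝕜 R l - a)) := by
      rw [Submodule.span_le]
      rintro _ ⟨i, rfl⟩
      refine ⟨(l - μ i)⁻¹ • e i, ?_⟩
      rw [LinearMap.mulLeft_apply, mul_smul_comm, sub_mul, ← Algebra.smul_def, hae, ← sub_smul,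
        inv_smul_smul₀ (hsub i)]
    obtain ⟨x, hx⟩ := hle hspan
    exact spectrum.mem_iff.mp hl (IsUnit.of_mul_eq_one x hx)
  · rintro _ ⟨i, rfl⟩
    exact mem_spectrum_of_mul_eq_smul (hae i) (he i)

end Spectrum

section Graph

variable {α : Type*} {G : SimpleGraph α}

theorem exists_adj_dist_eq (hconn : G.Connected) {x y : α} {i : ℕ}
    (hxy : G.dist x y = i + 1) : ∃ z, G.Adj y z ∧ G.dist x z = i := by
  obtain ⟨p, hp⟩ := hconn.exists_walk_length_eq_dist y x
  rw [SimpleGraph.dist_comm, hxy] at hp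
  cases p with
  | nil => simp at hp
  | @cons _ z _ hyz q =>
    refine ⟨z, hyz, ?_⟩
    have hq : q.length = i := by simpa using hp
    have hle := SimpleGraph.dist_le q
    have htri := hconn.dist_triangle (u := x) (v := z) (w := y)
    rw [SimpleGraph.dist_comm (u := z), SimpleGraph.dist_eq_one_iff_adj.mpr hyz] at htri
    rw [SimpleGraph.dist_comm] at hle
    omega

/-- The all-ones matrix, usually written `J`. -/
def allOnes (α : Type*) : Matrix α α ℝ := Matrix.of fun _ _ => 1

/-- The matrix `I + A_D` of the relation `x = y ∨ d(x, y) = D` (for `D ≠ 0`), whose classes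
are the fibres of an antipodal cover. -/
noncomputable def antipodalM [DecidableEq α] (G : SimpleGraph α) (D : ℕ) : Matrix α α ℝ :=
  1 + distM G D

theorem allOnes_apply (x y : α) : allOnes α x y = 1 := rfl

theorem isSymm_allOnes : (allOnes α).IsSymm := rfl

theorem distM_apply (i : ℕ) (x y : α) : distM G i x y = if G.dist x y = i then 1 else 0 := rfl

theorem isSymm_distM (i : ℕ) : (distM G i).IsSymm :=
  Matrix.IsSymm.ext fun x y => by rw [distM_apply, distM_apply, SimpleGraph.dist_comm]

theorem distM_zero [DecidableEq α] (hconn : G.Connected) : distM G 0 = 1 := by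
  ext x y
  simp only [distM_apply, hconn.dist_eq_zero_iff, Matrix.one_apply]

theorem distM_eq_zero {D i : ℕ} (hdiam : ∀ x y, G.dist x y ≤ D) (hi : D < i) :
    distM G i = 0 := by
  ext x y
  exact if_neg ((hdiam x y).trans_lt hi).ne

theorem sum_distM {D : ℕ} (hdiam : ∀ x y, G.dist x y ≤ D) :
    ∑ i ∈ Finset.range (D + 1), distM G i = allOnes α := by
  ext x y
  simp only [Matrix.sum_apply, distM_apply, allOnes_apply]
  rw [Finset.sum_ite_eq, if_pos (Finset.mem_range_succ_iff.mpr (hdiam x y))]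

theorem qDist_one (D : ℕ) : qDist G D 1 = ∑ i ∈ Finset.Icc 1 D, (i : ℝ) • distM G i := by
  simp only [qDist, div_one, one_pow, Finset.sum_const, Finset.card_range, nsmul_eq_mul, mul_one]

theorem qDist_three_one [DecidableEq α] (hconn : G.Connected) (hdiam : ∀ x y, G.dist x y ≤ 3) :
    qDist G 3 1 =
      (2 : ℝ) • allOnes α - (3 : ℝ) • (1 : Matrix α α ℝ) - distM G 1 + antipodalM G 3 := by
  rw [qDist_one, ← sum_distM hdiam, antipodalM, ← distM_zero hconn]
  simp only [Finset.sum_range_succ, Finset.range_zero, Finset.sum_empty,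
    Finset.sum_Icc_succ_top, Nat.reduceLeDiff, Finset.Icc_self, Finset.sum_singleton, Nat.reduceAdd]
  push_cast
  module

theorem isSymm_antipodalM [DecidableEq α] (D : ℕ) : (antipodalM G D).IsSymm :=
  Matrix.isSymm_one.add (isSymm_distM D)

theorem antipodalM_apply [DecidableEq α] {D : ℕ} (hD : D ≠ 0) (x y : α) :
    antipodalM G D x y = if y = x ∨ G.dist x y = D then 1 else 0 := by
  rw [antipodalM, Matrix.add_apply, Matrix.one_apply, distM_apply]
  by_cases hxy : x = y
  · subst hxy
    simp [hD.symm]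
  · simp [hxy, Ne.symm hxy]

theorem sum_ite_eq_ncard [Fintype α] (p : α → Prop) [DecidablePred p] :
    ∑ z, (if p z then (1 : ℝ) else 0) = ({z | p z} : Set α).ncard := by
  rw [Finset.sum_boole, ← Set.ncard_coe_finset, Finset.coe_filter_univ]

theorem distM_mul_distM_one_apply [Fintype α] (i : ℕ) (x y : α) :
    (distM G i * distM G 1) x y = ({z | G.Adj y z ∧ G.dist x z = i} : Set α).ncard := by
  classical
  rw [← sum_ite_eq_ncard, Matrix.mul_apply]
  refine Finset.sum_congr rfl fun z _ => ?_
  simp only [distM_apply, SimpleGraph.dist_eq_one_iff_adj, G.adj_comm z y, ite_and, ite_mul,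
    one_mul, zero_mul]
  split_ifs <;> rfl

theorem isAntipodalCover_of_antipodalM_mul_self [Fintype α] [DecidableEq α] {D r : ℕ}
    (hD : D ≠ 0) (hK : antipodalM G D * antipodalM G D = (r : ℝ) • antipodalM G D) :
    IsAntipodalCover G D r := by
  have hentry (x y : α) :
      ∑ z, antipodalM G D x z * antipodalM G D z y = r * antipodalM G D x y := by
    rw [← Matrix.mul_apply, hK, Matrix.smul_apply, smul_eq_mul]
  refine ⟨fun u v w huv huw => ?_, fun x => ?_⟩
  · by_contra hvw
    have hsum := hentry v w
    rw [antipodalM_apply hD v w, if_neg (by rwa [eq_comm]), mul_zero,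
      Finset.sum_eq_zero_iff_of_nonneg fun z _ => ?_] at hsum
    · have hu := hsum u (Finset.mem_univ u)
      simp [antipodalM_apply hD, SimpleGraph.dist_comm (u := v), huv, huw] at hu
    · simp only [antipodalM_apply hD]
      positivity
  · have hrow : ∑ z, antipodalM G D x z * antipodalM G D z x =
        ∑ z, if z = x ∨ G.dist x z = D then 1 else 0 := by
      refine Finset.sum_congr rfl fun z _ => ?_
      rw [(isSymm_antipodalM D).apply x z, antipodalM_apply hD]
      split_ifs <;> simp
    rw [hentry, antipodalM_apply hD, if_pos (Or.inl rfl), mul_one, sum_ite_eq_ncard] at hrow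
    exact_mod_cast hrow.symm

end Graph

namespace IsDRG

variable {α : Type*} {G : SimpleGraph α} {D : ℕ} {b c : ℕ → ℕ}

theorem connected (hG : IsDRG G D b c) : G.Connected := hG.1

theorem dist_le (hG : IsDRG G D b c) (x y : α) : G.dist x y ≤ D := hG.2.1 x y

theorem ncard_pred (hG : IsDRG G D b c) {x y : α} {i : ℕ} (hxy : G.dist x y = i + 1) :
    ({z | G.Adj y z ∧ G.dist x z = i} : Set α).ncard = c (i + 1) :=
  (hG.2.2.2.2 (i + 1) (hxy ▸ hG.dist_le x y) x y hxy).1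

theorem ncard_succ (hG : IsDRG G D b c) {x y : α} {i : ℕ} (hxy : G.dist x y = i) :
    ({z | G.Adj y z ∧ G.dist x z = i + 1} : Set α).ncard = b i :=
  (hG.2.2.2.2 i (hxy ▸ hG.dist_le x y) x y hxy).2

theorem exists_dist_eq (hG : IsDRG G D b c) {i : ℕ} (hi : i ≤ D) : ∃ x y, G.dist x y = i := by
  induction hi using Nat.decreasingInduction with
  | self => exact hG.2.2.1
  | of_succ j _ ih =>
    obtain ⟨x, y, hxy⟩ := ih
    obtain ⟨z, -, hz⟩ := exists_adj_dist_eq hG.connected hxy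
    exact ⟨x, z, hz⟩

theorem c_succ_pos [Finite α] (hG : IsDRG G D b c) {i : ℕ} (hi : i < D) : 0 < c (i + 1) := by
  obtain ⟨x, y, hxy⟩ := hG.exists_dist_eq (Nat.succ_le_of_lt hi)
  rw [← hG.ncard_pred hxy, Set.ncard_pos]
  exact exists_adj_dist_eq hG.connected hxy

theorem b_diam (hG : IsDRG G D b c) : b D = 0 := by
  obtain ⟨x, y, hxy⟩ := hG.exists_dist_eq le_rfl
  have hempty : {z | G.Adj y z ∧ G.dist x z = D + 1} = ∅ :=
    Set.eq_empty_of_forall_notMem fun z hz => (hz.2 ▸ hG.dist_le x z).not_gt D.lt_succ_self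
  rw [← hG.ncard_succ hxy, hempty, Set.ncard_empty]

variable [Fintype α]

theorem allOnes_mul_distM_one (hG : IsDRG G D b c) :
    allOnes α * distM G 1 = (b 0 : ℝ) • allOnes α := by
  ext x y
  have hdeg : (distM G 1 * distM G 1) y y = b 0 := by
    rw [distM_mul_distM_one_apply, hG.ncard_succ SimpleGraph.dist_self]
  rw [Matrix.smul_apply, allOnes_apply, smul_eq_mul, mul_one, ← hdeg]
  refine Finset.sum_congr rfl fun z _ => ?_
  simp only [allOnes_apply, distM_apply, SimpleGraph.dist_comm (u := y) (v := z)]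
  split_ifs <;> simp

theorem distM_one_mul_allOnes (hG : IsDRG G D b c) :
    distM G 1 * allOnes α = (b 0 : ℝ) • allOnes α := by
  simpa only [Matrix.transpose_mul, Matrix.transpose_smul, isSymm_allOnes.eq, (isSymm_distM _).eq]
    using congrArg Matrix.transpose hG.allOnes_mul_distM_one

theorem distM_mul_distM_one_apply_self (hG : IsDRG G D b c) {x y : α} {i : ℕ}
    (hxy : G.dist x y = i + 1) : (distM G (i + 1) * distM G 1) x y = aInt b c (i + 1) := by
  have hpred : (distM G i * distM G 1) x y = c (i + 1) := by
    rw [distM_mul_distM_one_apply, hG.ncard_pred hxy]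
  have hsucc : (distM G (i + 2) * distM G 1) x y = b (i + 1) := by
    rw [distM_mul_distM_one_apply, hG.ncard_succ hxy]
  have htotal : ((distM G i + distM G (i + 1) + distM G (i + 2)) * distM G 1) x y = b 0 := by
    trans (allOnes α * distM G 1) x y
    · refine Finset.sum_congr rfl fun z _ => ?_
      by_cases hyz : G.Adj y z
      · have hdist := hyz.diff_dist_adj (u := x)
        rw [hxy, Nat.add_sub_cancel] at hdist
        rcases hdist with hxz | hxz | hxz <;> simp [distM_apply, allOnes_apply, hxz, add_assoc]
      · simp [distM_apply, G.adj_comm z, hyz]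
    · rw [hG.allOnes_mul_distM_one, Matrix.smul_apply, allOnes_apply, smul_eq_mul, mul_one]
  rw [Matrix.add_mul, Matrix.add_mul, Matrix.add_apply, Matrix.add_apply, hpred, hsucc] at htotal
  rw [aInt]
  linarith

theorem distM_succ_mul_distM_one (hG : IsDRG G D b c) (i : ℕ) :
    distM G (i + 1) * distM G 1 =
      (b i : ℝ) • distM G i + aInt b c (i + 1) • distM G (i + 1) +
        (c (i + 2) : ℝ) • distM G (i + 2) := by
  ext x y
  have hrhs : ((b i : ℝ) • distM G i + aInt b c (i + 1) • distM G (i + 1) +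
      (c (i + 2) : ℝ) • distM G (i + 2)) x y =
        if G.dist x y = i then (b i : ℝ) else if G.dist x y = i + 1 then aInt b c (i + 1)
          else if G.dist x y = i + 2 then (c (i + 2) : ℝ) else 0 := by
    simp only [Matrix.add_apply, Matrix.smul_apply, distM_apply, smul_eq_mul]
    split_ifs <;> first | omega | simp
  rw [hrhs]
  split_ifs with hpred hself hsucc
  · rw [distM_mul_distM_one_apply, hG.ncard_succ hpred]
  · exact hG.distM_mul_distM_one_apply_self hself
  · rw [distM_mul_distM_one_apply, hG.ncard_pred hsucc]
  · rw [distM_mul_distM_one_apply, Nat.cast_eq_zero, Set.ncard_eq_zero]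
    refine Set.eq_empty_of_forall_notMem fun z ⟨hyz, hz⟩ => ?_
    have hdist := hyz.diff_dist_adj (u := x)
    omega

end IsDRG

/-- The graph is distance-regular with the intersection array `{k, c₂(r-1), 1; 1, c₂, k}` of an
antipodal `r`-cover of diameter 3. The entry `b₁ = c₂(r-1)` is written without subtraction. -/
structure HasCoverArray {α : Type*} (G : SimpleGraph α) (b c : ℕ → ℕ) (r : ℕ) : Prop where
  isDRG : IsDRG G 3 b c
  b_one_add : b 1 + c 2 = r * c 2
  b_two : b 2 = 1
  c_three : c 3 = b 0

namespace HasCoverArray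

variable {α : Type*} {G : SimpleGraph α} {b c : ℕ → ℕ} {r : ℕ}

theorem b_zero_pos [Finite α] (h : HasCoverArray G b c r) : 0 < b 0 :=
  h.c_three ▸ h.isDRG.c_succ_pos (i := 2) (by norm_num)

theorem c_two_pos [Finite α] (h : HasCoverArray G b c r) : 0 < c 2 :=
  h.isDRG.c_succ_pos (i := 1) (by norm_num)

theorem r_ne_zero [Finite α] (h : HasCoverArray G b c r) : r ≠ 0 := by
  rintro rfl
  have hb := h.b_one_add
  have hc := h.c_two_pos
  omega

theorem aInt_three (h : HasCoverArray G b c r) : aInt b c 3 = 0 := by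
  rw [aInt, h.isDRG.b_diam, h.c_three, Nat.cast_zero, sub_zero, sub_self]

theorem aInt_one (h : HasCoverArray G b c r) : aInt b c 1 - c 2 = b 0 - 1 - r * c 2 := by
  have hb : (b 1 : ℝ) + c 2 = r * c 2 := by exact_mod_cast h.b_one_add
  rw [aInt, h.isDRG.2.2.2.1, Nat.cast_one]
  linarith

variable [DecidableEq α]

theorem distM_one_add_distM_two (h : HasCoverArray G b c r) :
    distM G 1 + distM G 2 = allOnes α - antipodalM G 3 := by
  rw [← sum_distM h.isDRG.dist_le, antipodalM, ← distM_zero h.isDRG.connected]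
  simp only [Finset.sum_range_succ, Finset.range_zero, Finset.sum_empty]
  abel

variable [Fintype α]

theorem antipodalM_mul_distM_one (h : HasCoverArray G b c r) :
    antipodalM G 3 * distM G 1 = allOnes α - antipodalM G 3 := by
  rw [antipodalM, Matrix.add_mul, Matrix.one_mul, h.isDRG.distM_succ_mul_distM_one 2,
    ← antipodalM, ← h.distM_one_add_distM_two, h.b_two, h.aInt_three,
    distM_eq_zero h.isDRG.dist_le (by norm_num : 3 < 2 + 2)]
  simp

theorem distM_one_mul_antipodalM (h : HasCoverArray G b c r) :
    distM G 1 * antipodalM G 3 = allOnes α - antipodalM G 3 := by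
  simpa only [Matrix.transpose_mul, Matrix.transpose_sub, isSymm_allOnes.eq, (isSymm_distM _).eq,
    (isSymm_antipodalM _).eq] using congrArg Matrix.transpose h.antipodalM_mul_distM_one

theorem distM_one_mul_self (h : HasCoverArray G b c r) :
    distM G 1 * distM G 1 = (b 0 : ℝ) • (1 : Matrix α α ℝ) + (aInt b c 1 - c 2) • distM G 1 +
      (c 2 : ℝ) • (allOnes α - antipodalM G 3) := by
  rw [h.isDRG.distM_succ_mul_distM_one 0, distM_zero h.isDRG.connected,
    ← h.distM_one_add_distM_two]
  module

theorem antipodalM_mul_allOnes (h : HasCoverArray G b c r) :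
    antipodalM G 3 * allOnes α = (r : ℝ) • allOnes α := by
  have hAJ := h.isDRG.distM_one_mul_allOnes
  have hquad : (c 2 : ℝ) • ((b 0 : ℝ) • (antipodalM G 3 * allOnes α)) =
      (c 2 : ℝ) • ((b 0 : ℝ) • ((r : ℝ) • allOnes α)) := by
    have hAAJ := congrArg (· * allOnes α) h.distM_one_mul_self
    have hKAJ := congrArg (· * allOnes α) h.antipodalM_mul_distM_one
    simp only [mul_assoc, add_mul, smul_mul_assoc, hAJ, mul_smul_comm, one_mul, h.aInt_one]
      at hAAJ hKAJ
    rw [hKAJ, ← sub_eq_zero]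
    rw [← sub_eq_zero] at hAAJ
    rw [← neg_eq_zero, ← hAAJ]
    module
  have hc : (c 2 : ℝ) ≠ 0 := by exact_mod_cast h.c_two_pos.ne'
  have hb : (b 0 : ℝ) ≠ 0 := by exact_mod_cast h.b_zero_pos.ne'
  exact smul_right_injective _ hb (smul_right_injective _ hc hquad)

theorem allOnes_mul_antipodalM (h : HasCoverArray G b c r) :
    allOnes α * antipodalM G 3 = (r : ℝ) • allOnes α := by
  simpa only [Matrix.transpose_mul, Matrix.transpose_smul, isSymm_allOnes.eq,
    (isSymm_antipodalM _).eq] using congrArg Matrix.transpose h.antipodalM_mul_allOnes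

omit [DecidableEq α] in
theorem allOnes_mul_self (h : HasCoverArray G b c r) :
    allOnes α * allOnes α = (r * (b 0 + 1) : ℝ) • allOnes α := by
  classical
  have hKAJ := congrArg (· * allOnes α) h.antipodalM_mul_distM_one
  simp only [mul_assoc, sub_mul, h.isDRG.distM_one_mul_allOnes, mul_smul_comm,
    h.antipodalM_mul_allOnes, eq_sub_iff_add_eq] at hKAJ
  rw [← hKAJ]
  module

theorem antipodalM_mul_self (h : HasCoverArray G b c r) :
    antipodalM G 3 * antipodalM G 3 = (r : ℝ) • antipodalM G 3 := by
  have hKAA := congrArg (antipodalM G 3 * ·) h.distM_one_mul_self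
  simp only [← mul_assoc, mul_add, mul_sub, sub_mul, mul_smul_comm, mul_one,
    h.antipodalM_mul_distM_one, h.antipodalM_mul_allOnes, h.isDRG.allOnes_mul_distM_one,
    h.aInt_one] at hKAA
  have hc : (c 2 : ℝ) ≠ 0 := by exact_mod_cast h.c_two_pos.ne'
  refine smul_right_injective _ hc ?_
  rw [← sub_eq_zero] at hKAA ⊢
  rw [← hKAA]
  module

omit [Fintype α] [DecidableEq α] in
theorem isAntipodalCover [Finite α] (h : HasCoverArray G b c r) : IsAntipodalCover G 3 r := by
  classical
  have := Fintype.ofFinite α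
  exact isAntipodalCover_of_antipodalM_mul_self three_ne_zero h.antipodalM_mul_self

theorem allOnes_mul_sub_antipodalM (h : HasCoverArray G b c r) :
    allOnes α * ((r : ℝ) • 1 - antipodalM G 3) = 0 := by
  rw [mul_sub, h.allOnes_mul_antipodalM, mul_smul_comm, mul_one, sub_self]

theorem antipodalM_mul_sub_antipodalM (h : HasCoverArray G b c r) :
    antipodalM G 3 * ((r : ℝ) • 1 - antipodalM G 3) = 0 := by
  rw [mul_sub, h.antipodalM_mul_self, mul_smul_comm, mul_one, sub_self]

theorem allOnes_mul_distM_one_sub_mul (h : HasCoverArray G b c r) (τ : ℝ) :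
    allOnes α * ((distM G 1 - τ • 1) * ((r : ℝ) • 1 - antipodalM G 3)) = 0 := by
  rw [← mul_assoc, mul_sub (allOnes α), h.isDRG.allOnes_mul_distM_one, mul_smul_comm, mul_one,
    ← sub_smul, smul_mul_assoc, h.allOnes_mul_sub_antipodalM, smul_zero]

theorem antipodalM_mul_distM_one_sub_mul (h : HasCoverArray G b c r) (τ : ℝ) :
    antipodalM G 3 * ((distM G 1 - τ • 1) * ((r : ℝ) • 1 - antipodalM G 3)) = 0 := by
  rw [← mul_assoc, mul_sub (antipodalM G 3), h.antipodalM_mul_distM_one, mul_smul_comm, mul_one,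
    sub_mul, sub_mul, smul_mul_assoc, h.allOnes_mul_sub_antipodalM,
    h.antipodalM_mul_sub_antipodalM, smul_zero, sub_zero, sub_zero]

theorem distM_one_sub_mul_distM_one_sub (h : HasCoverArray G b c r) {θ τ : ℝ}
    (hadd : θ + τ = aInt b c 1 - c 2) (hmul : θ * τ = -b 0) :
    (distM G 1 - θ • 1) * (distM G 1 - τ • 1) = (c 2 : ℝ) • (allOnes α - antipodalM G 3) := by
  have hb : (b 0 : ℝ) = -(θ * τ) := by rw [hmul, neg_neg]
  simp only [mul_sub, sub_mul, mul_smul_comm, smul_mul_assoc, mul_one, one_mul,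
    h.distM_one_mul_self, ← hadd, hb]
  module

theorem distM_one_mul_distM_one_sub_mul (h : HasCoverArray G b c r) {θ τ : ℝ}
    (hadd : θ + τ = aInt b c 1 - c 2) (hmul : θ * τ = -b 0) :
    distM G 1 * ((distM G 1 - τ • 1) * ((r : ℝ) • 1 - antipodalM G 3)) =
      θ • ((distM G 1 - τ • 1) * ((r : ℝ) • 1 - antipodalM G 3)) := by
  rw [← sub_eq_zero]
  calc _ = (distM G 1 - θ • 1) * (distM G 1 - τ • 1) * ((r : ℝ) • 1 - antipodalM G 3) := by
        rw [mul_assoc, sub_mul (distM G 1) (θ • 1), smul_mul_assoc, one_mul]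
    _ = 0 := by
        rw [h.distM_one_sub_mul_distM_one_sub hadd hmul, smul_mul_assoc, sub_mul,
          h.allOnes_mul_sub_antipodalM, h.antipodalM_mul_sub_antipodalM, sub_self, smul_zero]

end HasCoverArray

/-- Four matrices whose columns are common eigenvectors of the Bose-Mesner algebra of an antipodal
`r`-cover of diameter 3 and valency `k`: up to scaling, they are its primitive idempotents for the
adjacency eigenvalues `k`, `-1`, `θ` and `τ`, in this order. -/
noncomputable def coverEigenmatrix {α : Type*} [Fintype α] [DecidableEq α] (G : SimpleGraph α)
    (k r θ τ : ℝ) : Fin 4 → Matrix α α ℝ :=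
  ![allOnes α, (k + 1) • antipodalM G 3 - allOnes α,
    (distM G 1 - τ • 1) * (r • 1 - antipodalM G 3),
    (distM G 1 - θ • 1) * (r • 1 - antipodalM G 3)]

namespace HasCoverArray

variable {α : Type*} [Fintype α] [DecidableEq α] {G : SimpleGraph α} {b c : ℕ → ℕ} {r : ℕ}
  {θ τ : ℝ}

theorem allOnes_mul_coverEigenmatrix (h : HasCoverArray G b c r) (i : Fin 4) :
    allOnes α * coverEigenmatrix G (b 0) r θ τ i =
      (![r * (b 0 + 1), 0, 0, 0] : Fin 4 → ℝ) i • coverEigenmatrix G (b 0) r θ τ i := by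
  fin_cases i
  · exact h.allOnes_mul_self
  · change allOnes α * ((b 0 + 1 : ℝ) • antipodalM G 3 - allOnes α) = (0 : ℝ) • _
    rw [mul_sub, mul_smul_comm, h.allOnes_mul_antipodalM, h.allOnes_mul_self]
    module
  · exact (h.allOnes_mul_distM_one_sub_mul τ).trans (zero_smul ℝ _).symm
  · exact (h.allOnes_mul_distM_one_sub_mul θ).trans (zero_smul ℝ _).symm

theorem antipodalM_mul_coverEigenmatrix (h : HasCoverArray G b c r) (i : Fin 4) :
    antipodalM G 3 * coverEigenmatrix G (b 0) r θ τ i =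
      (![r, r, 0, 0] : Fin 4 → ℝ) i • coverEigenmatrix G (b 0) r θ τ i := by
  fin_cases i
  · exact h.antipodalM_mul_allOnes
  · change antipodalM G 3 * ((b 0 + 1 : ℝ) • antipodalM G 3 - allOnes α) =
      (r : ℝ) • ((b 0 + 1 : ℝ) • antipodalM G 3 - allOnes α)
    rw [mul_sub, mul_smul_comm, h.antipodalM_mul_self, h.antipodalM_mul_allOnes]
    module
  · exact (h.antipodalM_mul_distM_one_sub_mul τ).trans (zero_smul ℝ _).symm
  · exact (h.antipodalM_mul_distM_one_sub_mul θ).trans (zero_smul ℝ _).symm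

theorem distM_one_mul_coverEigenmatrix (h : HasCoverArray G b c r)
    (hadd : θ + τ = aInt b c 1 - c 2) (hmul : θ * τ = -b 0) (i : Fin 4) :
    distM G 1 * coverEigenmatrix G (b 0) r θ τ i =
      (![b 0, -1, θ, τ] : Fin 4 → ℝ) i • coverEigenmatrix G (b 0) r θ τ i := by
  fin_cases i
  · exact h.isDRG.distM_one_mul_allOnes
  · change distM G 1 * ((b 0 + 1 : ℝ) • antipodalM G 3 - allOnes α) =
      (-1 : ℝ) • ((b 0 + 1 : ℝ) • antipodalM G 3 - allOnes α)
    rw [mul_sub, mul_smul_comm, h.distM_one_mul_antipodalM, h.isDRG.distM_one_mul_allOnes]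
    module
  · exact h.distM_one_mul_distM_one_sub_mul hadd hmul
  · exact h.distM_one_mul_distM_one_sub_mul (add_comm θ τ ▸ hadd) (mul_comm θ τ ▸ hmul)

theorem qDist_mul_coverEigenmatrix (h : HasCoverArray G b c r)
    (hadd : θ + τ = aInt b c 1 - c 2) (hmul : θ * τ = -b 0) (i : Fin 4) :
    qDist G 3 1 * coverEigenmatrix G (b 0) r θ τ i =
      (![2 * (r * (b 0 + 1)) - 3 - b 0 + r, r - 2, -3 - θ, -3 - τ] : Fin 4 → ℝ) i •
        coverEigenmatrix G (b 0) r θ τ i := by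
  rw [qDist_three_one h.isDRG.connected h.isDRG.dist_le]
  simp only [add_mul, sub_mul, smul_mul_assoc, one_mul, h.allOnes_mul_coverEigenmatrix,
    h.antipodalM_mul_coverEigenmatrix, h.distM_one_mul_coverEigenmatrix hadd hmul]
  fin_cases i <;> (simp only [Fin.reduceFinMk, Matrix.cons_val]; module)

theorem coverEigenmatrix_ne_zero (h : HasCoverArray G b c r) (hmul : θ * τ = -b 0) (i : Fin 4) :
    coverEigenmatrix G (b 0) r θ τ i ≠ 0 := by
  obtain ⟨x, y, hxy⟩ := h.isDRG.exists_dist_eq le_rfl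
  have hne : x ≠ y := by
    rintro rfl
    simp at hxy
  have hA : distM G 1 x y = 0 := by simp [distM_apply, hxy]
  have hK : antipodalM G 3 x y = 1 := by simp [antipodalM_apply, hxy]
  have hb : (b 0 : ℝ) ≠ 0 := by exact_mod_cast h.b_zero_pos.ne'
  have hθτ : θ ≠ 0 ∧ τ ≠ 0 := mul_ne_zero_iff.mp (hmul ▸ neg_ne_zero.mpr hb)
  have hnontrivial (σ : ℝ) :
      ((distM G 1 - σ • 1) * ((r : ℝ) • 1 - antipodalM G 3)) x y = σ := by
    simp only [mul_sub, sub_mul, mul_smul_comm, smul_mul_assoc, mul_one, one_mul,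
      h.distM_one_mul_antipodalM, Matrix.sub_apply, Matrix.smul_apply, Matrix.one_apply_ne hne,
      hA, hK, allOnes_apply, smul_eq_mul]
    ring
  suffices hentry : coverEigenmatrix G (b 0) r θ τ i x y ≠ 0 from fun hzero =>
    hentry (congrFun (congrFun hzero x) y)
  fin_cases i
  · exact one_ne_zero
  · change (b 0 + 1 : ℝ) * antipodalM G 3 x y - 1 ≠ 0
    rwa [hK, mul_one, add_sub_cancel_right]
  · exact (hnontrivial τ).trans_ne hθτ.2
  · exact (hnontrivial θ).trans_ne hθτ.1

theorem one_mem_span_coverEigenmatrix (h : HasCoverArray G b c r) (hmul : θ * τ = -b 0) :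
    1 ∈ Submodule.span ℝ (Set.range (coverEigenmatrix G (b 0) r θ τ)) := by
  set e := coverEigenmatrix G (b 0) r θ τ with he
  have hmem (i : Fin 4) : e i ∈ Submodule.span ℝ (Set.range e) :=
    Submodule.subset_span (Set.mem_range_self i)
  have hb : (0 : ℝ) < b 0 := by exact_mod_cast h.b_zero_pos
  have hr : (r : ℝ) ≠ 0 := by exact_mod_cast h.r_ne_zero
  have hθτ : θ - τ ≠ 0 := fun heq => by
    rw [sub_eq_zero.mp heq] at hmul
    nlinarith [mul_self_nonneg τ]
  have hfibre : antipodalM G 3 = (b 0 + 1 : ℝ)⁻¹ • (e 0 + e 1) := by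
    rw [eq_inv_smul_iff₀ (by positivity)]
    exact (add_sub_cancel _ _).symm
  have hcompl : (r : ℝ) • 1 - antipodalM G 3 = (θ - τ)⁻¹ • (e 2 - e 3) := by
    rw [eq_inv_smul_iff₀ hθτ]
    change _ = (distM G 1 - τ • 1) * _ - (distM G 1 - θ • 1) * _
    rw [← sub_mul, sub_sub_sub_cancel_left, ← sub_smul, smul_one_mul]
  have hone : (1 : Matrix α α ℝ) =
      (r : ℝ)⁻¹ • (antipodalM G 3 + ((r : ℝ) • 1 - antipodalM G 3)) := by
    rw [add_sub_cancel, inv_smul_smul₀ hr]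
  rw [hone, hcompl, hfibre]
  exact Submodule.smul_mem _ _ (add_mem
    (Submodule.smul_mem _ _ (add_mem (hmem 0) (hmem 1)))
    (Submodule.smul_mem _ _ (sub_mem (hmem 2) (hmem 3))))

theorem spectrum_distM_one (h : HasCoverArray G b c r) (hadd : θ + τ = aInt b c 1 - c 2)
    (hmul : θ * τ = -b 0) : spectrum ℝ (distM G 1) = {(b 0 : ℝ), -1, θ, τ} := by
  rw [spectrum_eq_range_of_mul_eq_smul (h.distM_one_mul_coverEigenmatrix hadd hmul)
    (h.coverEigenmatrix_ne_zero hmul) (h.one_mem_span_coverEigenmatrix hmul)]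
  simp only [Matrix.range_cons, Matrix.range_empty, Set.union_empty, Set.singleton_union]

theorem spectrum_qDist (h : HasCoverArray G b c r) (hadd : θ + τ = aInt b c 1 - c 2)
    (hmul : θ * τ = -b 0) :
    spectrum ℝ (qDist G 3 1) =
      {2 * (r * (b 0 + 1)) - 3 - (b 0 : ℝ) + r, (r : ℝ) - 2, -3 - θ, -3 - τ} := by
  rw [spectrum_eq_range_of_mul_eq_smul (h.qDist_mul_coverEigenmatrix hadd hmul)
    (h.coverEigenmatrix_ne_zero hmul) (h.one_mem_span_coverEigenmatrix hmul)]
  simp only [Matrix.range_cons, Matrix.range_empty, Set.union_empty, Set.singleton_union]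

end HasCoverArray

-- The value of `b 0` makes `-(r + 1)` a root of `x² + (c₂ - a₁) x - k`, the other root being
-- `c₂ - 1`.
theorem stmt19_general (G : SimpleGraph V) (b c : ℕ → ℕ) (r : ℕ) (h : HasCoverArray G b c r)
    (hb0 : (b 0 : ℝ) = (r + 1) * (c 2 - 1)) :
    IsAntipodalCover G 3 r ∧
    ((-(r : ℝ) - 1) ∈ spectrum ℝ (distM G 1) ∧
      ∀ μ ∈ spectrum ℝ (distM G 1), -(r : ℝ) - 1 ≤ μ) ∧
    (spectrum ℝ (qDist G 3 1)).ncard = 3 := by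
  have hr : (1 : ℝ) ≤ r := by exact_mod_cast Nat.one_le_iff_ne_zero.mpr h.r_ne_zero
  have hc : (1 : ℝ) ≤ c 2 := by exact_mod_cast h.c_two_pos
  have hadd : (-r - 1 : ℝ) + (c 2 - 1) = aInt b c 1 - c 2 := by
    rw [h.aInt_one, hb0]
    ring
  have hmul : (-r - 1 : ℝ) * (c 2 - 1) = -b 0 := by
    rw [hb0]
    ring
  refine ⟨h.isAntipodalCover, ?_, ?_⟩
  · rw [h.spectrum_distM_one hadd hmul]
    refine ⟨by simp, ?_⟩
    rintro μ (rfl | rfl | rfl | rfl) <;> linarith [(b 0).cast_nonneg (α := ℝ)]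
  · have hmerge : (-3 - (-r - 1) : ℝ) = r - 2 := by ring
    have hgap : (r - 2 : ℝ) < 2 * (r * (b 0 + 1)) - 3 - b 0 + r := by
      have hpos : (0 : ℝ) < (2 * r - 1) * (b 0 + 1) := mul_pos (by linarith) (by positivity)
      linarith
    have hgap' : (-3 - (c 2 - 1) : ℝ) < r - 2 := by linarith
    rw [h.spectrum_qDist hadd hmul, hmerge, Set.insert_idem]
    exact Set.ncard_eq_three.mpr
      ⟨_, _, _, hgap.ne', (hgap'.trans hgap).ne', hgap'.ne', rfl⟩

/-- Remark 3.12(ii): for an integer `r ≥ 2`, a distance-regular graph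
with intersection array `{(r+1)², (r−1)(r+2), 1; 1, r+2, (r+1)²}` is an antipodal `r`-cover
of diameter 3, its smallest adjacency eigenvalue is `−(r+1)`, and its distance matrix has
exactly three distinct eigenvalues. -/
theorem stmt19 (G : SimpleGraph V) (b c : ℕ → ℕ) (r : ℕ) (hr : 2 ≤ r)
    (hG : IsDRG G 3 b c)
    (hb0 : b 0 = (r + 1) ^ 2) (hb1 : b 1 = (r - 1) * (r + 2)) (hb2 : b 2 = 1)
    (hc2 : c 2 = r + 2) (hc3 : c 3 = (r + 1) ^ 2) :
    IsAntipodalCover G 3 r ∧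
    ((-(r : ℝ) - 1) ∈ spectrum ℝ (distM G 1) ∧
      ∀ μ ∈ spectrum ℝ (distM G 1), -(r : ℝ) - 1 ≤ μ) ∧
    (spectrum ℝ (qDist G 3 1)).ncard = 3 := by
  obtain ⟨s, rfl⟩ := Nat.exists_eq_add_of_le' (one_le_two.trans hr)
  exact stmt19_general G b c (s + 1) ⟨hG, by rw [hb1, hc2, Nat.add_sub_cancel]; ring, hb2,
    hc3.trans hb0.symm⟩ (by rw [hb0, hc2]; push_cast; ring)
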